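/- Let Ω be a measurable space and let P₀, P₁, …, P_t be probability measures on Ω (t ≥ 1). Let z₀, z₁, …, z_t : Ω → ℝ be measurable loss functions satisfying 0 ≤ z_k ≤ M for some M > 0, let u₀, u₁, …, u_t : Ω → ℝ be measurable proxy functions, let λ₀, λ₁, …, λ_t ∈ ℝ and τ ∈ (0, M). Assume the inequality (1/t)·∑_{k=1}^{t} P_k({u_k > λ_k} ∩ {z_k ≤ τ}) ≤ P₀({u₀ > λ₀} ∩ {z₀ ≤ τ}) + (1/t)·∑_{k=1}^{t} P_k({u_k ≤ λ_k} ∩ {z_k > τ}) holds. Then the running test risk is lower bounded: (1/t)·∑_{k=1}^{t} ∫ z_k dP_k ≥ τ·( (1/t)·∑_{k=1}^{t} P_k({u_k > λ_k}) − P₀({u₀ > λ₀} ∩ {z₀ ≤ τ}) ). -/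

import Mathlib

open MeasureTheory

/-!
Let `A` be the alarm event of a proxy and `B = {τ < z}` the event of a large loss, so that `B \ A`
and `A \ B` are its false negatives and false positives. Since `μ A + μ (B \ A) - μ (A \ B) = μ B`,
Markov's inequality bounds `τ` times the left-hand side by the risk. After averaging, the assumption
replaces the difference of the two unobservable test terms by the source false positive probability.
-/

theorem measureReal_add_measureReal_sdiff_comm {Ω : Type*} [MeasurableSpace Ω] {μ : Measure Ω}
    {s t : Set Ω} (hs : NullMeasurableSet s μ) (ht : NullMeasurableSet t μ)
    (hμs : μ s ≠ ⊤ := by finiteness) (hμt : μ t ≠ ⊤ := by finiteness) :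
    μ.real s + μ.real (t \ s) = μ.real t + μ.real (s \ t) := by
  have split_s := measureReal_inter_add_sdiff₀ (s := s) ht
  have split_t := measureReal_inter_add_sdiff₀ (s := t) hs
  rw [Set.inter_comm] at split_t
  linarith

theorem mul_alarm_add_falseNeg_sub_falsePos_le_integral {Ω : Type*} [MeasurableSpace Ω]
    {μ : Measure Ω} [IsFiniteMeasure μ] {z : Ω → ℝ} {A : Set Ω} {τ : ℝ} (hτ : 0 ≤ τ)
    (hz_nonneg : 0 ≤ᵐ[μ] z) (hz_int : Integrable z μ) (hA : NullMeasurableSet A μ) :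
    τ * (μ.real A + μ.real ({ω | τ < z ω} \ A) - μ.real (A \ {ω | τ < z ω})) ≤ ∫ ω, z ω ∂μ := by
  have hz_gt : NullMeasurableSet {ω | τ < z ω} μ :=
    nullMeasurableSet_lt aemeasurable_const hz_int.aemeasurable
  calc τ * (μ.real A + μ.real ({ω | τ < z ω} \ A) - μ.real (A \ {ω | τ < z ω}))
    _ = τ * μ.real {ω | τ < z ω} := by
        rw [measureReal_add_measureReal_sdiff_comm hA hz_gt, add_sub_cancel_right]
    _ ≤ τ * μ.real {ω | τ ≤ z ω} := mul_le_mul_of_nonneg_left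
        (measureReal_mono (Set.ofPred_subset_ofPred.2 fun _ ↦ le_of_lt)) hτ
    _ ≤ ∫ ω, z ω ∂μ := mul_meas_ge_le_integral_of_nonneg hz_nonneg hz_int τ

theorem unsupervised_lower_bound_general {ι : Type*} {Ω : ι → Type*}
    [∀ k, MeasurableSpace (Ω k)] {P : ∀ k, Measure (Ω k)} [∀ k, IsFiniteMeasure (P k)]
    {z : ∀ k, Ω k → ℝ} {A : ∀ k, Set (Ω k)} {I : Finset ι} {w : ι → ℝ} {τ α : ℝ}
    (hw : ∀ k ∈ I, 0 ≤ w k) (hτ : 0 ≤ τ) (hz_nonneg : ∀ k ∈ I, 0 ≤ᵐ[P k] z k)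
    (hz_int : ∀ k ∈ I, Integrable (z k) (P k)) (hA : ∀ k ∈ I, NullMeasurableSet (A k) (P k))
    (hα : ∑ k ∈ I, w k * (P k).real (A k \ {ω | τ < z k ω})
      ≤ α + ∑ k ∈ I, w k * (P k).real ({ω | τ < z k ω} \ A k)) :
    τ * (∑ k ∈ I, w k * (P k).real (A k) - α) ≤ ∑ k ∈ I, w k * ∫ ω, z k ω ∂(P k) := by
  calc τ * (∑ k ∈ I, w k * (P k).real (A k) - α)
    _ ≤ τ * (∑ k ∈ I, w k * (P k).real (A k)
          + ∑ k ∈ I, w k * (P k).real ({ω | τ < z k ω} \ A k)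
          - ∑ k ∈ I, w k * (P k).real (A k \ {ω | τ < z k ω})) :=
        mul_le_mul_of_nonneg_left (by linarith) hτ
    _ = ∑ k ∈ I, w k * (τ * ((P k).real (A k) + (P k).real ({ω | τ < z k ω} \ A k)
          - (P k).real (A k \ {ω | τ < z k ω}))) := by
        rw [← Finset.sum_add_distrib, ← Finset.sum_sub_distrib, Finset.mul_sum]
        exact Finset.sum_congr rfl fun k _ ↦ by ring
    _ ≤ ∑ k ∈ I, w k * ∫ ω, z k ω ∂(P k) :=
        Finset.sum_le_sum fun k hk ↦ mul_le_mul_of_nonneg_left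
          (mul_alarm_add_falseNeg_sub_falsePos_le_integral hτ (hz_nonneg k hk) (hz_int k hk)
            (hA k hk)) (hw k hk)

/-- Proposition 1: unsupervised lower bound on the running test risk. -/
theorem unsupervised_lower_bound
    {Ω : Type*} [MeasurableSpace Ω]
    (t : ℕ) (ht : 1 ≤ t)
    (P : ℕ → Measure Ω) (hP : ∀ k, IsProbabilityMeasure (P k))
    (z u : ℕ → Ω → ℝ)
    (hz : ∀ k, Measurable (z k)) (hu : ∀ k, Measurable (u k))
    (M : ℝ) (hM : 0 < M)
    (hzb : ∀ k, ∀ ω, 0 ≤ z k ω ∧ z k ω ≤ M)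
    (lam : ℕ → ℝ) (τ : ℝ) (hτ : τ ∈ Set.Ioo 0 M)
    (hA : (1 / (t : ℝ)) * ∑ k ∈ Finset.Icc 1 t,
        (P k {ω | u k ω > lam k ∧ z k ω ≤ τ}).toReal
      ≤ (P 0 {ω | u 0 ω > lam 0 ∧ z 0 ω ≤ τ}).toReal
        + (1 / (t : ℝ)) * ∑ k ∈ Finset.Icc 1 t,
          (P k {ω | u k ω ≤ lam k ∧ z k ω > τ}).toReal) :
    (1 / (t : ℝ)) * ∑ k ∈ Finset.Icc 1 t, ∫ ω, z k ω ∂(P k)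
      ≥ τ * ((1 / (t : ℝ)) * ∑ k ∈ Finset.Icc 1 t, (P k {ω | u k ω > lam k}).toReal
        - (P 0 {ω | u 0 ω > lam 0 ∧ z 0 ω ≤ τ}).toReal) := by
  simp only [Finset.mul_sum]
  exact unsupervised_lower_bound_general
    (A := fun k ↦ {ω | u k ω > lam k}) (fun _ _ ↦ by positivity) hτ.1.le
    (fun k _ ↦ .of_forall fun ω ↦ (hzb k ω).1)
    (fun k _ ↦ .of_mem_Icc 0 M (hz k).aemeasurable (.of_forall (hzb k)))
    (fun k _ ↦ nullMeasurableSet_lt aemeasurable_const (hu k).aemeasurable)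
    (by simpa [Finset.mul_sum, Set.sdiff_eq, Set.inter_def, and_comm, Measure.real] using hA)
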